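/- arXiv:1103.0729 — 2 statements merged into one kernel-verified Lean document; each statement's English description precedes it below -/
import Mathlib

section
/- If γ is non-oscillating at infinity, then: (1) Hs(f)(x) ≠ 0 for x on γ with |x| large enough, and the normalized Hessian Hs(f)(x)/‖Hs(f)(x)‖ converges, as |x| → ∞ along γ, to a nonzero self-adjoint operator 𝓗 with ‖𝓗‖ = 1; (2) the limit of secants ν is an eigen-vector of 𝓗: there exists λ ∈ ℝ with 𝓗·ν = λ·ν. -/
open scoped RealInnerProductSpace Topology
open Filter

theorem aux_hasFDerivAt_eval {n : ℕ} (Q : MvPolynomial (Fin n) ℝ) (x : EuclideanSpace ℝ (Fin n)) :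
    HasFDerivAt (fun y : EuclideanSpace ℝ (Fin n) => MvPolynomial.eval (fun i => y i) Q)
      (∑ i, MvPolynomial.eval (fun i => x i) (MvPolynomial.pderiv i Q) •
        (EuclideanSpace.proj i : EuclideanSpace ℝ (Fin n) →L[ℝ] ℝ)) x := by
  induction Q using MvPolynomial.induction_on with
  | C a => simpa using hasFDerivAt_const a x
  | add p q hp hq =>
    simp only [map_add, add_smul, Finset.sum_add_distrib]
    exact hp.add hq
  | mul_X p j hp =>
    have h := hp.mul ((EuclideanSpace.proj j : EuclideanSpace ℝ (Fin n) →L[ℝ] ℝ).hasFDerivAt (x := x))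
    have h2 := h.congr_fderiv (g' := ∑ i, MvPolynomial.eval (fun i => x i)
        (MvPolynomial.pderiv i (p * MvPolynomial.X j)) •
        (EuclideanSpace.proj i : EuclideanSpace ℝ (Fin n) →L[ℝ] ℝ)) (by
      ext v
      simp [MvPolynomial.pderiv_X, Pi.single_apply, add_mul,
        Finset.sum_add_distrib, Finset.mul_sum, apply_ite, ite_mul]
      refine Finset.sum_congr rfl fun i _ => by ring)
    refine h2.congr_of_eventuallyEq (Eventually.of_forall fun y => ?_)
    simp

theorem aux_pderiv_comm {n : ℕ} (i j : Fin n) (Q : MvPolynomial (Fin n) ℝ) :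
    MvPolynomial.pderiv i (MvPolynomial.pderiv j Q) = MvPolynomial.pderiv j (MvPolynomial.pderiv i Q) := by
  ext m
  simp only [MvPolynomial.coeff_pderiv]
  rw [add_right_comm]
  by_cases h : i = j
  · subst h; rfl
  · have h' : j ≠ i := fun e => h e.symm
    simp [h, h']
    ring

theorem aux_gradient {n : ℕ} (f : EuclideanSpace ℝ (Fin n) → ℝ) (P : MvPolynomial (Fin n) ℝ)
    (hP : ∀ x : EuclideanSpace ℝ (Fin n), f x = MvPolynomial.eval (fun i => x i) P) :
    gradient f = fun x => WithLp.toLp 2 (fun i => MvPolynomial.eval (fun i => x i) (MvPolynomial.pderiv i P)) := by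
  have hf : f = fun x => MvPolynomial.eval (fun i => x i) P := funext hP
  ext1 x
  apply HasGradientAt.gradient
  rw [hasGradientAt_iff_hasFDerivAt, hf]
  refine (aux_hasFDerivAt_eval P x).congr_fderiv ?_
  ext v
  simp [PiLp.inner_apply, mul_comm]

theorem aux_hess {n : ℕ} (f : EuclideanSpace ℝ (Fin n) → ℝ) (P : MvPolynomial (Fin n) ℝ)
    (hP : ∀ x : EuclideanSpace ℝ (Fin n), f x = MvPolynomial.eval (fun i => x i) P)
    (x : EuclideanSpace ℝ (Fin n)) :
    HasFDerivAt (gradient f) (fderiv ℝ (gradient f) x) x ∧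
    ∀ v i, fderiv ℝ (gradient f) x v i =
      ∑ j, MvPolynomial.eval (fun i => x i) (MvPolynomial.pderiv j (MvPolynomial.pderiv i P)) * v j := by
  have h := aux_gradient f P hP
  have hd : DifferentiableAt ℝ (gradient f) x := by
    rw [h]
    rw [differentiableAt_euclidean]
    intro i
    exact (aux_hasFDerivAt_eval (MvPolynomial.pderiv i P) x).differentiableAt
  refine ⟨hd.hasFDerivAt, fun v i => ?_⟩
  have h1 := ((EuclideanSpace.proj i : EuclideanSpace ℝ (Fin n) →L[ℝ] ℝ).hasFDerivAt (x := gradient f x)).comp x hd.hasFDerivAt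
  have h2 := aux_hasFDerivAt_eval (MvPolynomial.pderiv i P) x
  have h3 : (EuclideanSpace.proj i : EuclideanSpace ℝ (Fin n) →L[ℝ] ℝ) ∘ gradient f = fun y : EuclideanSpace ℝ (Fin n) => MvPolynomial.eval (fun i => y i) (MvPolynomial.pderiv i P) := by
    rw [h]; ext; simp
  rw [h3] at h1
  have := congrArg (fun L => L v) (h1.unique h2)
  simpa using this

/-- Non-oscillation of a parametrized curve, in sign form. -/
def AuxK {n : ℕ} (c : ℝ → Fin n → ℝ) : Prop :=
  ∀ Q : MvPolynomial (Fin n) ℝ, (∀ᶠ s in atTop, MvPolynomial.eval (c s) Q = 0) ∨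
    (∀ᶠ s in atTop, 0 < MvPolynomial.eval (c s) Q) ∨ (∀ᶠ s in atTop, MvPolynomial.eval (c s) Q < 0)

theorem aux_sign (h : ℝ → ℝ) (hc : ContinuousOn h (Set.Ici 0))
    (ho : ∃ s₀ : ℝ, (∀ s ≥ s₀, h s = 0) ∨ (∀ s ≥ s₀, h s ≠ 0)) :
    (∀ᶠ s in atTop, h s = 0) ∨ (∀ᶠ s in atTop, 0 < h s) ∨ (∀ᶠ s in atTop, h s < 0) := by
  obtain ⟨s₀, h0 | h0⟩ := ho
  · exact Or.inl (eventually_atTop.2 ⟨s₀, h0⟩)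
  right
  have hc' : ContinuousOn h (Set.Ici (max s₀ 0)) := hc.mono (Set.Ici_subset_Ici.2 (le_max_right _ _))
  have himg := (isPreconnected_Ici (a := max s₀ 0)).image h hc'
  by_cases hpos : 0 < h (max s₀ 0)
  · left
    filter_upwards [eventually_ge_atTop (max s₀ 0)] with s hs
    by_contra hneg
    push Not at hneg
    obtain ⟨t, ht, ht0⟩ := himg.ordConnected.out (Set.mem_image_of_mem h hs)
      (Set.mem_image_of_mem h (Set.self_mem_Ici)) ⟨hneg, hpos.le⟩
    exact h0 t (le_trans (le_max_left _ _) ht) ht0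
  · right
    push Not at hpos
    filter_upwards [eventually_ge_atTop (max s₀ 0)] with s hs
    by_contra hneg
    push Not at hneg
    obtain ⟨t, ht, ht0⟩ := himg.ordConnected.out (Set.mem_image_of_mem h (Set.self_mem_Ici))
      (Set.mem_image_of_mem h hs) ⟨hpos, hneg⟩
    exact h0 t (le_trans (le_max_left _ _) ht) ht0

theorem aux_le_total {n : ℕ} {c : ℝ → Fin n → ℝ} (K : AuxK c) (Q R : MvPolynomial (Fin n) ℝ) :
    (∀ᶠ s in atTop, MvPolynomial.eval (c s) Q ≤ MvPolynomial.eval (c s) R) ∨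
    (∀ᶠ s in atTop, MvPolynomial.eval (c s) R < MvPolynomial.eval (c s) Q) := by
  rcases K (Q - R) with h | h | h
  · left; filter_upwards [h] with s hs
    simp only [map_sub] at hs; linarith
  · right; filter_upwards [h] with s hs
    simp only [map_sub] at hs; linarith
  · left; filter_upwards [h] with s hs
    simp only [map_sub] at hs; linarith

theorem aux_max {n : ℕ} {c : ℝ → Fin n → ℝ} (K : AuxK c) {ι : Type} [Fintype ι] [Nonempty ι]
    (Q : ι → MvPolynomial (Fin n) ℝ) :
    ∃ i₀, ∀ i, ∀ᶠ s in atTop, MvPolynomial.eval (c s) (Q i) ^ 2 ≤ MvPolynomial.eval (c s) (Q i₀) ^ 2 := by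
  classical
  suffices h : ∀ S : Finset ι, S.Nonempty → ∃ i₀, ∀ i ∈ S, ∀ᶠ s in atTop,
      MvPolynomial.eval (c s) (Q i) ^ 2 ≤ MvPolynomial.eval (c s) (Q i₀) ^ 2 by
    obtain ⟨i₀, h⟩ := h Finset.univ Finset.univ_nonempty
    exact ⟨i₀, fun i => h i (Finset.mem_univ i)⟩
  intro S hS
  induction hS using Finset.Nonempty.cons_induction with
  | singleton a => exact ⟨a, by simp⟩
  | cons a S ha hS ih =>
    obtain ⟨i₀, h⟩ := ih
    rcases aux_le_total K (Q a ^ 2) (Q i₀ ^ 2) with h1 | h1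
    · refine ⟨i₀, fun i hi => ?_⟩
      rcases Finset.mem_cons.1 hi with rfl | hi
      · simpa using h1
      · exact h i hi
    · refine ⟨a, fun i hi => ?_⟩
      rcases Finset.mem_cons.1 hi with rfl | hi
      · simp
      · filter_upwards [h i hi, h1] with s hs1 hs2
        simp only [map_pow] at hs2
        linarith

theorem aux_ratio {n : ℕ} {c : ℝ → Fin n → ℝ} (K : AuxK c) (Q R : MvPolynomial (Fin n) ℝ)
    (hR : ∀ᶠ s in atTop, MvPolynomial.eval (c s) R ≠ 0)
    (hQR : ∀ᶠ s in atTop, MvPolynomial.eval (c s) Q ^ 2 ≤ MvPolynomial.eval (c s) R ^ 2) :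
    ∃ l : ℝ, Tendsto (fun s => MvPolynomial.eval (c s) Q / |MvPolynomial.eval (c s) R|) atTop (𝓝 l) := by
  have hb : ∀ᶠ s in atTop, |MvPolynomial.eval (c s) Q / (|MvPolynomial.eval (c s) R|)| ≤ 1 := by
    filter_upwards [hR, hQR] with s h1 h2
    rw [abs_div, abs_abs]
    exact div_le_one_of_le₀ (sq_le_sq.1 h2) (abs_nonneg _)
  refine tendsto_of_no_upcrossings dense_univ ?_ ⟨1, ?_⟩ ⟨-1, ?_⟩
  · rintro a - b - hab ⟨h1, h2⟩
    have key : ∀ σ : ℝ, (∀ᶠ s in atTop, |MvPolynomial.eval (c s) R| = σ * MvPolynomial.eval (c s) R) → False := by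
      intro σ hσ
      rcases aux_le_total K Q (MvPolynomial.C (a * σ) * R) with h | h
      · refine h2 ?_
        filter_upwards [h, hσ, hR] with s hs1 hs2 hs3 hs4
        have hp : 0 < |MvPolynomial.eval (c s) R| := abs_pos.2 hs3
        rw [lt_div_iff₀ hp, hs2] at hs4
        simp only [map_mul, MvPolynomial.eval_C] at hs1
        rw [hs2] at hp
        nlinarith
      · refine h1 ?_
        filter_upwards [h, hσ, hR] with s hs1 hs2 hs3 hs4
        have hp : 0 < |MvPolynomial.eval (c s) R| := abs_pos.2 hs3
        rw [div_lt_iff₀ hp, hs2] at hs4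
        simp only [map_mul, MvPolynomial.eval_C] at hs1
        nlinarith
    rcases K R with h | h | h
    · obtain ⟨s, hs1, hs2⟩ := (h.and hR).exists
      exact hs2 hs1
    · exact key 1 (h.mono fun s hs => by rw [abs_of_pos hs, one_mul])
    · exact key (-1) (h.mono fun s hs => by rw [abs_of_neg hs]; ring)
  · exact hb.mono fun s hs => (abs_le.1 hs).2
  · exact hb.mono fun s hs => (abs_le.1 hs).1

theorem aux_vec {n : ℕ} {c : ℝ → Fin n → ℝ} (K : AuxK c) {ι : Type} [Fintype ι]
    (Q : ι → MvPolynomial (Fin n) ℝ)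
    (hne : ∃ i, ¬ ∀ᶠ s in atTop, MvPolynomial.eval (c s) (Q i) = 0) :
    ∃ m : ℝ → ℝ, (∀ᶠ s in atTop, 0 < m s) ∧ ∃ l : ι → ℝ, l ≠ 0 ∧
      ∀ i, Tendsto (fun s => MvPolynomial.eval (c s) (Q i) / m s) atTop (𝓝 (l i)) := by
  obtain ⟨i₁, hi₁⟩ := hne
  have : Nonempty ι := ⟨i₁⟩
  obtain ⟨i₀, hmax⟩ := aux_max K Q
  have h0 : ∀ᶠ s in atTop, MvPolynomial.eval (c s) (Q i₀) ≠ 0 := by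
    rcases K (Q i₀) with h | h | h
    · exfalso
      apply hi₁
      filter_upwards [h, hmax i₁] with s hs1 hs2
      rw [hs1] at hs2
      nlinarith
    · exact h.mono fun s hs => hs.ne'
    · exact h.mono fun s hs => hs.ne
  choose l hl using fun i => aux_ratio K (Q i) (Q i₀) h0 (hmax i)
  refine ⟨fun s => |MvPolynomial.eval (c s) (Q i₀)|, h0.mono fun s hs => abs_pos.2 hs, l, ?_, hl⟩
  intro hl0
  have h1 := (hl i₀).abs
  have h2 : Tendsto (fun s => |MvPolynomial.eval (c s) (Q i₀) / (|MvPolynomial.eval (c s) (Q i₀)|)|) atTop (𝓝 1) := by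
    refine tendsto_const_nhds.congr' ?_
    filter_upwards [h0] with s hs
    rw [abs_div, abs_abs, div_self (abs_pos.2 hs).ne']
  have := tendsto_nhds_unique h1 h2
  simp [hl0] at this

/-- normalization -/
theorem aux_normalize {E : Type*} [NormedAddCommGroup E] [NormedSpace ℝ E] (T : ℝ → E) (m : ℝ → ℝ)
    (hm : ∀ᶠ s in atTop, 0 < m s) (M : E) (hM : M ≠ 0)
    (h : Tendsto (fun s => (m s)⁻¹ • T s) atTop (𝓝 M)) :
    Tendsto (fun s => ‖T s‖⁻¹ • T s) atTop (𝓝 (‖M‖⁻¹ • M)) := by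
  have h1 := (h.norm.inv₀ (norm_ne_zero_iff.2 hM)).smul h
  refine h1.congr' ?_
  filter_upwards [hm] with s hs
  rw [norm_smul, smul_smul, norm_inv, Real.norm_of_nonneg hs.le]
  congr 1
  field_simp

theorem aux_clm {E : Type*} [NormedAddCommGroup E] [NormedSpace ℝ E] (A : ℝ → E →L[ℝ] E)
    (u : ℝ → E) (H : E →L[ℝ] E) (ν : E) (hA : Tendsto A atTop (𝓝 H)) (hu : Tendsto u atTop (𝓝 ν)) :
    Tendsto (fun s => A s (u s)) atTop (𝓝 (H ν)) :=
  ((isBoundedBilinearMap_apply (𝕜 := ℝ) (E := E) (F := E)).continuous.tendsto (H, ν)).comp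
    (hA.prodMk_nhds hu)

/-- limit of derivative equals limit of secants -/
theorem aux_secant {E : Type*} [NormedAddCommGroup E] [NormedSpace ℝ E] (γ u : ℝ → E)
    (hγ : ∀ s ∈ Set.Ici (0 : ℝ), HasDerivAt γ (u s) s) (e ν : E) (he : ‖e‖ = 1)
    (hu : Tendsto u atTop (𝓝 e))
    (hν : Tendsto (fun s => ‖γ s‖⁻¹ • γ s) atTop (𝓝 ν)) : ν = e := by
  have key : Tendsto (fun s : ℝ => s⁻¹ • γ s) atTop (𝓝 e) := by
    rw [Metric.tendsto_nhds]
    intro ε hε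
    have h1 := (Metric.tendsto_nhds.1 hu (ε / 2) (by positivity))
    obtain ⟨s₀, hs₀⟩ := eventually_atTop.1 (h1.and (eventually_ge_atTop 0))
    have h2 : ∀ s ≥ s₀, ‖(γ s - s • e) - (γ s₀ - s₀ • e)‖ ≤ ε / 2 * ‖s - s₀‖ := by
      intro s hs
      refine (convex_Ici s₀).norm_image_sub_le_of_norm_hasDerivWithin_le
        (f := fun s => γ s - s • e) (f' := fun s => u s - (1 : ℝ) • e)
        (fun x hx => ?_) (fun x hx => ?_) Set.self_mem_Ici hs
      · exact ((hγ x (hs₀ x hx).2).sub ((hasDerivAt_id x).smul_const e)).hasDerivWithinAt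
      · have := (hs₀ x hx).1
        rw [dist_eq_norm] at this
        simpa using this.le
    have h3 : Tendsto (fun s : ℝ => s⁻¹ * ‖γ s₀ - s₀ • e‖) atTop (𝓝 0) := by
      simpa using tendsto_inv_atTop_zero.mul_const ‖γ s₀ - s₀ • e‖
    filter_upwards [eventually_ge_atTop s₀, eventually_gt_atTop 0,
      h3.eventually (gt_mem_nhds (show (0:ℝ) < ε / 2 by positivity))] with s hs hs0 hs3
    have e1 : s⁻¹ • γ s - e = s⁻¹ • (γ s - s • e) := by
      rw [smul_sub, smul_smul, inv_mul_cancel₀ hs0.ne', one_smul]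
    rw [dist_eq_norm, e1, norm_smul, norm_inv, Real.norm_of_nonneg hs0.le]
    have h4 := h2 s hs
    have h5 : ‖γ s - s • e‖ ≤ ε / 2 * s + ‖γ s₀ - s₀ • e‖ := by
      have := norm_le_norm_add_norm_sub' (γ s - s • e) (γ s₀ - s₀ • e)
      have h6 : ‖s - s₀‖ ≤ s := by
        rw [Real.norm_of_nonneg (by linarith)]; linarith [(hs₀ s₀ le_rfl).2]
      nlinarith
    calc s⁻¹ * ‖γ s - s • e‖ ≤ s⁻¹ * (ε / 2 * s + ‖γ s₀ - s₀ • e‖) := by gcongr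
      _ = ε / 2 + s⁻¹ * ‖γ s₀ - s₀ • e‖ := by field_simp
      _ < ε := by linarith
  have h := aux_normalize γ id (eventually_gt_atTop 0) e (by rintro rfl; simp at he) key
  rw [he] at h
  simpa using tendsto_nhds_unique hν h

/-- rank one elementary operators -/
noncomputable def auxB {n : ℕ} (p : Fin n × Fin n) :
    EuclideanSpace ℝ (Fin n) →L[ℝ] EuclideanSpace ℝ (Fin n) :=
  (EuclideanSpace.proj p.2 : EuclideanSpace ℝ (Fin n) →L[ℝ] ℝ).smulRight
    (EuclideanSpace.single p.1 (1 : ℝ))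

theorem auxB_sum {n : ℕ} (l : Fin n × Fin n → ℝ) (v : EuclideanSpace ℝ (Fin n)) (i : Fin n) :
    (∑ p, l p • auxB p) v i = ∑ j, l (i, j) * v j := by
  simp only [ContinuousLinearMap.sum_apply, auxB]
  rw [Fintype.sum_prod_type]
  simp [Finset.sum_apply, Pi.single_apply]

/-- the gradient tends to zero along the curve -/
theorem aux_grad_zero {n : ℕ} (f : EuclideanSpace ℝ (Fin n) → ℝ) (P : MvPolynomial (Fin n) ℝ)
    (hP : ∀ x : EuclideanSpace ℝ (Fin n), f x = MvPolynomial.eval (fun i => x i) P)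
    (γ : ℝ → EuclideanSpace ℝ (Fin n))
    (hγreg : ∀ s ∈ Set.Ici (0 : ℝ), gradient f (γ s) ≠ 0)
    (hγode : ∀ s ∈ Set.Ici (0 : ℝ),
      HasDerivAt γ (‖gradient f (γ s)‖⁻¹ • gradient f (γ s)) s)
    (hfneg : ∀ s ∈ Set.Ici (0 : ℝ), f (γ s) < 0)
    (K : AuxK (fun s i => γ s i)) :
    Tendsto (fun s => gradient f (γ s)) atTop (𝓝 0) := by
  have hgr := aux_gradient f P hP
  have hsq : ∀ s, ‖gradient f (γ s)‖ ^ 2 =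
      MvPolynomial.eval (fun i => γ s i) (∑ i, MvPolynomial.pderiv i P ^ 2) := by
    intro s
    rw [hgr, EuclideanSpace.norm_sq_eq]
    simp
  have hder : ∀ s ∈ Set.Ici (0 : ℝ), HasDerivAt (fun s => f (γ s)) ‖gradient f (γ s)‖ s := by
    intro s hs
    have hd : DifferentiableAt ℝ f (γ s) := by
      have : f = fun x => MvPolynomial.eval (fun i => x i) P := funext hP
      rw [this]
      exact (aux_hasFDerivAt_eval P (γ s)).differentiableAt
    have h := hd.hasGradientAt.hasFDerivAt.comp_hasDerivAt s (hγode s hs)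
    refine h.congr_deriv ?_
    have h0 : ‖gradient f (γ s)‖ ≠ 0 := norm_ne_zero_iff.2 (hγreg s hs)
    simp only [map_smul, InnerProductSpace.toDual_apply_apply, real_inner_self_eq_norm_sq, smul_eq_mul]
    field_simp
  rw [tendsto_zero_iff_norm_tendsto_zero, Metric.tendsto_nhds]
  intro ε hε
  rcases aux_le_total K (MvPolynomial.C (ε ^ 2)) (∑ i, MvPolynomial.pderiv i P ^ 2) with h | h
  · exfalso
    obtain ⟨s₀, hs₀⟩ := eventually_atTop.1 (h.and (eventually_ge_atTop 0))
    have hmv := (convex_Ici s₀).mul_sub_le_image_sub_of_le_deriv (f := fun s => f (γ s)) (C := ε)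
      (fun x hx => (hder x (hs₀ x hx).2).continuousAt.continuousWithinAt)
      (fun x hx => (hder x (hs₀ x (interior_subset hx)).2).differentiableAt.differentiableWithinAt)
      (fun x hx => by
        have hx' := hs₀ x (interior_subset hx)
        rw [(hder x hx'.2).deriv]
        have := hx'.1
        rw [← hsq, MvPolynomial.eval_C] at this
        exact le_of_sq_le_sq this (norm_nonneg _))
    have hneg := hfneg s₀ (hs₀ s₀ le_rfl).2
    have h1 : s₀ ≤ s₀ + (- f (γ s₀)) / ε := by
      have : 0 < (- f (γ s₀)) / ε := div_pos (by linarith) hε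
      linarith
    have h2 := hmv s₀ Set.self_mem_Ici _ h1 h1
    have h3 := hfneg _ (hs₀ _ h1).2
    have h4 : ε * (s₀ + (- f (γ s₀)) / ε - s₀) = - f (γ s₀) := by field_simp; ring
    simp only [h4] at h2
    linarith
  · filter_upwards [h] with s hs
    rw [← hsq, MvPolynomial.eval_C] at hs
    rw [dist_zero_right, norm_norm]
    exact lt_of_pow_lt_pow_left₀ 2 hε.le hs

/-- along a trajectory non-oscillating at infinity the Hessian is eventually
nonzero, its normalized direction converges to a self-adjoint operator `𝓗` of norm one, and the
limit of secants `ν` is an eigen-vector of `𝓗`. -/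
theorem normalized_hessian_converges_and_nu_eigenvector_at_infinity
    {n : ℕ} (hn : 2 ≤ n)
    (f : EuclideanSpace ℝ (Fin n) → ℝ)
    (hfpoly : ∃ P : MvPolynomial (Fin n) ℝ, ∀ x : EuclideanSpace ℝ (Fin n),
      f x = MvPolynomial.eval (fun i => x i) P)
    (γ : ℝ → EuclideanSpace ℝ (Fin n))
    (hγreg : ∀ s ∈ Set.Ici (0 : ℝ), gradient f (γ s) ≠ 0)
    (hγode : ∀ s ∈ Set.Ici (0 : ℝ),
      HasDerivAt γ (‖gradient f (γ s)‖⁻¹ • gradient f (γ s)) s)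
    (hunbounded : Tendsto (fun s => ‖γ s‖) atTop atTop)
    (hfneg : ∀ s ∈ Set.Ici (0 : ℝ), f (γ s) < 0)
    (hfmono : StrictMonoOn (fun s => f (γ s)) (Set.Ici (0 : ℝ)))
    (hflim : Tendsto (fun s => f (γ s)) atTop (𝓝 0))
    (hosc : ∀ g : EuclideanSpace ℝ (Fin n) → ℝ,
      (∃ Q : MvPolynomial (Fin n) ℝ, ∀ x : EuclideanSpace ℝ (Fin n),
        g x = MvPolynomial.eval (fun i => x i) Q) →
      ∃ s₀ : ℝ, (∀ s ≥ s₀, g (γ s) = 0) ∨ (∀ s ≥ s₀, g (γ s) ≠ 0))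
    (ν : EuclideanSpace ℝ (Fin n)) (hν1 : ‖ν‖ = 1)
    (hνlim : Tendsto (fun s => ‖γ s‖⁻¹ • γ s) atTop (𝓝 ν))
    :
    (∀ᶠ s in atTop, fderiv ℝ (gradient f) (γ s) ≠ 0) ∧
    ∃ H : EuclideanSpace ℝ (Fin n) →L[ℝ] EuclideanSpace ℝ (Fin n),
      (∀ u v : EuclideanSpace ℝ (Fin n), ⟪H u, v⟫ = ⟪u, H v⟫) ∧ ‖H‖ = 1 ∧
      Tendsto (fun s => ‖fderiv ℝ (gradient f) (γ s)‖⁻¹ • fderiv ℝ (gradient f) (γ s))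
        atTop (𝓝 H) ∧
      ∃ lam : ℝ, H ν = lam • ν := by
  obtain ⟨P, hP⟩ := hfpoly
  have K : AuxK (fun s i => γ s i) := by
    intro Q
    refine aux_sign _ ?_ (hosc (fun x => MvPolynomial.eval (fun i => x i) Q) ⟨Q, fun x => rfl⟩)
    intro s hs
    exact ((aux_hasFDerivAt_eval Q (γ s)).continuousAt.comp
      (hγode s hs).continuousAt).continuousWithinAt
  have hgr := aux_gradient f P hP
  have hgi : ∀ s i, gradient f (γ s) i = MvPolynomial.eval (fun i => γ s i) (MvPolynomial.pderiv i P) := by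
    intro s i; rw [hgr]
  have hg0 := aux_grad_zero f P hP γ hγreg hγode hfneg K
  -- unit tangent converges to ν
  have hu : Tendsto (fun s => ‖gradient f (γ s)‖⁻¹ • gradient f (γ s)) atTop (𝓝 ν) := by
    obtain ⟨m, hm, l, hl0, hl⟩ := aux_vec K (fun i => MvPolynomial.pderiv i P) (by
      by_contra hcon
      push Not at hcon
      obtain ⟨s, hs1, hs2⟩ := ((eventually_all.2 hcon).and (eventually_ge_atTop 0)).exists
      apply hγreg s hs2
      ext i
      rw [hgi, hs1 i]; rfl)
    have hL : (WithLp.toLp 2 l : EuclideanSpace ℝ (Fin n)) ≠ 0 := by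
      intro h
      apply hl0
      ext i
      exact congrArg (fun v : EuclideanSpace ℝ (Fin n) => v i) h
    have h1 : Tendsto (fun s => (m s)⁻¹ • gradient f (γ s)) atTop (𝓝 (WithLp.toLp 2 l)) := by
      have h2 : Tendsto (fun s i => MvPolynomial.eval (fun i => γ s i) (MvPolynomial.pderiv i P) / m s)
        atTop (𝓝 l) := tendsto_pi_nhds.2 hl
      have h3 := ((PiLp.continuous_toLp 2 (fun _ : Fin n => ℝ)).tendsto l).comp h2
      refine h3.congr fun s => ?_
      ext i
      simp [hgi, div_eq_inv_mul]
    have h2 := aux_normalize _ m hm _ hL h1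
    have h3 := aux_secant γ _ hγode _ ν (by
      rw [norm_smul, norm_inv, norm_norm, inv_mul_cancel₀ (norm_ne_zero_iff.2 hL)]) h2 hνlim
    rw [h3]; exact h2
  -- derivative of the gradient along γ
  have hgder : ∀ s ∈ Set.Ici (0 : ℝ), HasDerivAt (fun s => gradient f (γ s))
      (fderiv ℝ (gradient f) (γ s) (‖gradient f (γ s)‖⁻¹ • gradient f (γ s))) s :=
    fun s hs => (aux_hess f P hP (γ s)).1.comp_hasDerivAt s (hγode s hs)
  set T : ℝ → EuclideanSpace ℝ (Fin n) →L[ℝ] EuclideanSpace ℝ (Fin n) :=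
    fun s => fderiv ℝ (gradient f) (γ s) with hT
  have hTs : ∀ s, T s = ∑ p : Fin n × Fin n, MvPolynomial.eval (fun i => γ s i)
      (MvPolynomial.pderiv p.2 (MvPolynomial.pderiv p.1 P)) • auxB p := by
    intro s
    ext v i
    rw [auxB_sum, (aux_hess f P hP (γ s)).2]
  have hsymm : ∀ s u v, ⟪T s u, v⟫ = ⟪u, T s v⟫ := by
    intro s u v
    simp only [PiLp.inner_apply, hT, (aux_hess f P hP (γ s)).2]
    simp only [RCLike.inner_apply, conj_trivial, Finset.sum_mul, Finset.mul_sum]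
    rw [Finset.sum_comm]
    refine Finset.sum_congr rfl fun i _ => Finset.sum_congr rfl fun j _ => ?_
    rw [aux_pderiv_comm i j]
    ring
  -- the Hessian converges up to scaling
  obtain ⟨m, hm, l, hl0, hl⟩ := aux_vec K (fun p : Fin n × Fin n =>
      MvPolynomial.pderiv p.2 (MvPolynomial.pderiv p.1 P)) (by
    by_contra hcon
    push Not at hcon
    obtain ⟨s₀, hs₀⟩ := eventually_atTop.1 ((eventually_all.2 hcon).and (eventually_ge_atTop 0))
    have hT0 : ∀ s ≥ s₀, T s = 0 := by
      intro s hs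
      rw [hTs]
      exact Finset.sum_eq_zero fun p _ => by rw [(hs₀ s hs).1 p]; exact zero_smul ℝ (auxB p)
    have hconst : ∀ s ≥ s₀, gradient f (γ s) = gradient f (γ s₀) := by
      intro s hs
      have := (convex_Ici s₀).norm_image_sub_le_of_norm_hasDerivWithin_le
        (f := fun s => gradient f (γ s)) (C := 0)
        (fun x hx => (hgder x (hs₀ x hx).2).hasDerivWithinAt)
        (fun x hx => by
          have := hT0 x hx
          simp only [hT] at this
          simp [this]) Set.self_mem_Ici (y := s) hs
      rw [zero_mul] at this
      exact sub_eq_zero.1 (norm_le_zero_iff.1 this)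
    have h1 : Tendsto (fun s => gradient f (γ s)) atTop (𝓝 (gradient f (γ s₀))) :=
      tendsto_const_nhds.congr' (by
        filter_upwards [eventually_ge_atTop s₀] with s hs
        exact (hconst s hs).symm)
    exact hγreg s₀ (hs₀ s₀ le_rfl).2 (tendsto_nhds_unique h1 hg0))
  have hTM : Tendsto (fun s => (m s)⁻¹ • T s) atTop (𝓝 (∑ p, l p • auxB p)) := by
    have h1 := tendsto_finsetSum (Finset.univ : Finset (Fin n × Fin n))
      (fun p _ => (hl p).smul_const (auxB p))
    refine h1.congr fun s => ?_
    rw [hTs, Finset.smul_sum]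
    refine Finset.sum_congr rfl fun p _ => ?_
    rw [smul_smul, div_eq_inv_mul]
  set M : EuclideanSpace ℝ (Fin n) →L[ℝ] EuclideanSpace ℝ (Fin n) := ∑ p, l p • auxB p with hMdef
  have hM : M ≠ 0 := by
    intro h
    apply hl0
    ext ⟨i, j⟩
    have h2 := auxB_sum l (EuclideanSpace.single j 1) i
    rw [← hMdef, h] at h2
    simpa [Pi.single_apply] using h2.symm
  have hlim := aux_normalize T m hm M hM hTM
  have hTne : ∀ᶠ s in atTop, T s ≠ 0 := by
    filter_upwards [hTM.eventually_ne hM] with s hs h0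
    exact hs (by rw [h0]; ext v; simp)
  set H := ‖M‖⁻¹ • M with hH
  refine ⟨hTne, H, ?_, ?_, hlim, ?_⟩
  · intro u v
    have h1 : Tendsto (fun s => ⟪(‖T s‖⁻¹ • T s) u, v⟫) atTop (𝓝 ⟪H u, v⟫) :=
      (((ContinuousLinearMap.apply ℝ _ u).continuous.tendsto H).comp hlim).inner tendsto_const_nhds
    have h2 : Tendsto (fun s => ⟪u, (‖T s‖⁻¹ • T s) v⟫) atTop (𝓝 ⟪u, H v⟫) :=
      tendsto_const_nhds.inner (((ContinuousLinearMap.apply ℝ _ v).continuous.tendsto H).comp hlim)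
    refine tendsto_nhds_unique h1 (h2.congr fun s => ?_)
    simp only [ContinuousLinearMap.smul_apply, inner_smul_left, inner_smul_right, hsymm]
    simp
  · rw [hH, norm_smul, norm_inv, norm_norm, inv_mul_cancel₀ (norm_ne_zero_iff.2 hM)]
  · -- eigenvector
    set u : ℝ → EuclideanSpace ℝ (Fin n) := fun s => ‖gradient f (γ s)‖⁻¹ • gradient f (γ s) with hudef
    by_cases hw : H ν = 0
    · exact ⟨0, by rw [hw, zero_smul]⟩
    set w := H ν with hwdef
    have hTu : Tendsto (fun s => (‖T s‖⁻¹ • T s) (u s)) atTop (𝓝 w) := aux_clm _ u H ν hlim hu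
    have hww : ⟪w, w⟫ ≠ 0 := fun h => hw (inner_self_eq_zero.1 h)
    have hTuv : ∀ v, Tendsto (fun s => ‖T s‖⁻¹ * ⟪T s (u s), v⟫) atTop (𝓝 ⟪w, v⟫) := by
      intro v
      refine (hTu.inner (tendsto_const_nhds (x := v))).congr fun s => ?_
      simp [inner_smul_left]
    have hDv : ∀ v, ∀ᶠ s in atTop, HasDerivAt (fun s => ⟪gradient f (γ s), v⟫) ⟪T s (u s), v⟫ s := by
      intro v
      filter_upwards [eventually_ge_atTop 0] with s hs
      have := (hgder s hs).inner ℝ (hasDerivAt_const s v)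
      rw [inner_zero_right, zero_add] at this
      exact this
    have hv0 : ∀ v, Tendsto (fun s => ⟪gradient f (γ s), v⟫) atTop (𝓝 0) := by
      intro v
      have h := Filter.Tendsto.inner (𝕜 := ℝ) hg0 (tendsto_const_nhds (x := v))
      rw [inner_zero_left] at h
      exact h
    have hne : ∀ᶠ s in atTop, ⟪T s (u s), w⟫ ≠ 0 := by
      filter_upwards [(hTuv w).eventually_ne hww] with s hs h0
      exact hs (by rw [h0, mul_zero])
    have hrat : ∀ v, Tendsto (fun s => ⟪gradient f (γ s), v⟫ / ⟪gradient f (γ s), w⟫) atTop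
        (𝓝 (⟪w, v⟫ / ⟪w, w⟫)) := by
      intro v
      refine HasDerivAt.lhopital_zero_atTop (hDv v) (hDv w) hne (hv0 v) (hv0 w) ?_
      refine ((hTuv v).div (hTuv w) hww).congr' ?_
      filter_upwards [hTne] with s hs
      have : ‖T s‖⁻¹ ≠ 0 := inv_ne_zero (norm_ne_zero_iff.2 hs)
      exact mul_div_mul_left _ _ this
    have hgw : ∀ᶠ s in atTop, ⟪gradient f (γ s), w⟫ ≠ 0 := by
      have h1 := (hrat w).eventually_ne (b₂ := 0) (by rw [div_self hww]; exact one_ne_zero)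
      filter_upwards [h1] with s hs h0
      exact hs (by rw [h0, div_zero])
    have hfin : ∀ v, ⟪ν, v⟫ = ⟪w, v⟫ / ⟪w, w⟫ * ⟪ν, w⟫ := by
      intro v
      have h1 := (hrat v).mul (Filter.Tendsto.inner (𝕜 := ℝ) hu (tendsto_const_nhds (x := w)))
      have h2 := Filter.Tendsto.inner (𝕜 := ℝ) hu (tendsto_const_nhds (x := v))
      refine tendsto_nhds_unique h2 (h1.congr' ?_)
      filter_upwards [hgw] with s hs
      simp only [hudef, inner_smul_left, conj_trivial]
      field_simp
    set κ := ⟪ν, w⟫ / ⟪w, w⟫ with hκ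
    have hνw : ν = κ • w := by
      refine ext_inner_right ℝ fun v => ?_
      rw [hfin v, inner_smul_left, hκ]
      simp only [conj_trivial]
      ring
    have hκ0 : κ ≠ 0 := by
      intro h
      rw [h, zero_smul] at hνw
      rw [hνw, norm_zero] at hν1
      exact zero_ne_one hν1
    refine ⟨κ⁻¹, ?_⟩
    conv_rhs => rw [hνw]
    rw [smul_smul, inv_mul_cancel₀ hκ0, one_smul]
end

section
/- If γ is non-oscillating at infinity, then with m and β as in the expansion of f at infinity along γ, the number m·β is an asymptotic critical value at infinity of the function g(x) = |x|^{m+1}·|∇f(x)|, witnessed along γ: g(x) → mβ and |x|·|∇g(x)| → 0 as |x| → ∞ along γ. -/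
open scoped RealInnerProductSpace Topology
open Filter

noncomputable def evv {n : ℕ} (Q : MvPolynomial (Fin n) ℝ) (x : EuclideanSpace ℝ (Fin n)) : ℝ :=
  MvPolynomial.eval (fun i => x i) Q

noncomputable def gvec {n : ℕ} (Q : MvPolynomial (Fin n) ℝ) (x : EuclideanSpace ℝ (Fin n)) :
    EuclideanSpace ℝ (Fin n) := WithLp.toLp 2 (fun i => evv (MvPolynomial.pderiv i Q) x)

noncomputable def DD {n : ℕ} (P Q : MvPolynomial (Fin n) ℝ) : MvPolynomial (Fin n) ℝ :=
  ∑ i, MvPolynomial.pderiv i Q * MvPolynomial.pderiv i P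

noncomputable def RR (n : ℕ) : MvPolynomial (Fin n) ℝ := ∑ i, MvPolynomial.X i ^ 2

noncomputable def TT {n : ℕ} (P : MvPolynomial (Fin n) ℝ) : MvPolynomial (Fin n) ℝ :=
  ∑ i, MvPolynomial.X i * MvPolynomial.pderiv i P

lemma evv_mul {n : ℕ} (A B : MvPolynomial (Fin n) ℝ) (x) : evv (A * B) x = evv A x * evv B x := by
  simp [evv]
lemma evv_add {n : ℕ} (A B : MvPolynomial (Fin n) ℝ) (x) : evv (A + B) x = evv A x + evv B x := by
  simp [evv]
lemma evv_sub {n : ℕ} (A B : MvPolynomial (Fin n) ℝ) (x) : evv (A - B) x = evv A x - evv B x := by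
  simp [evv]
lemma evv_C {n : ℕ} (c : ℝ) (x : EuclideanSpace ℝ (Fin n)) : evv (MvPolynomial.C c) x = c := by
  simp [evv]
lemma evv_pow {n : ℕ} (A : MvPolynomial (Fin n) ℝ) (k : ℕ) (x) : evv (A ^ k) x = evv A x ^ k := by
  simp [evv]

lemma evv_hasFDerivAt {n : ℕ} (Q : MvPolynomial (Fin n) ℝ) (x : EuclideanSpace ℝ (Fin n)) :
    HasFDerivAt (evv Q) (innerSL ℝ (gvec Q x)) x := by
  induction Q using MvPolynomial.induction_on with
  | C a =>
    have : (evv (MvPolynomial.C a) : EuclideanSpace ℝ (Fin n) → ℝ) = fun _ => a := by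
      ext y; simp [evv]
    rw [this]
    refine (hasFDerivAt_const a x).congr_fderiv ?_
    ext v; simp [gvec, evv, PiLp.inner_apply]
  | add p q hp hq =>
    have : (evv (p + q) : EuclideanSpace ℝ (Fin n) → ℝ) = fun y => evv p y + evv q y := by
      ext y; simp [evv]
    rw [this]
    refine (hp.add hq).congr_fderiv ?_
    ext v; simp [gvec, evv, PiLp.inner_apply, Finset.sum_add_distrib, mul_add]
  | mul_X p i hp =>
    have : (evv (p * MvPolynomial.X i) : EuclideanSpace ℝ (Fin n) → ℝ) = fun y => evv p y * y i := by
      ext y; simp [evv]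
    rw [this]
    have hi : HasFDerivAt (fun y : EuclideanSpace ℝ (Fin n) => y i)
        (EuclideanSpace.proj i : EuclideanSpace ℝ (Fin n) →L[ℝ] ℝ) x :=
      (EuclideanSpace.proj i : EuclideanSpace ℝ (Fin n) →L[ℝ] ℝ).hasFDerivAt
    refine (hp.mul hi).congr_fderiv ?_
    ext v
    simp [gvec, evv, PiLp.inner_apply, Pi.single_apply, MvPolynomial.pderiv_X, mul_add,
      Finset.sum_add_distrib, Finset.mul_sum, apply_ite]
    rw [mul_comm]; congr 1
    apply Finset.sum_congr rfl; intros; ring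

lemma evv_gradient {n : ℕ} (Q : MvPolynomial (Fin n) ℝ) (x : EuclideanSpace ℝ (Fin n)) :
    gradient (evv Q) x = gvec Q x := by
  apply HasGradientAt.gradient
  rw [hasGradientAt_iff_hasFDerivAt]
  exact evv_hasFDerivAt Q x

lemma evv_DD {n : ℕ} (P Q : MvPolynomial (Fin n) ℝ) (x) :
    evv (DD P Q) x = ⟪gvec Q x, gvec P x⟫ := by
  simp [evv, DD, gvec, PiLp.inner_apply, mul_comm]

lemma evv_DDPP {n : ℕ} (P : MvPolynomial (Fin n) ℝ) (x) :
    evv (DD P P) x = ‖gvec P x‖ ^ 2 := by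
  rw [evv_DD, real_inner_self_eq_norm_sq]

lemma evv_RR {n : ℕ} (x : EuclideanSpace ℝ (Fin n)) : evv (RR n) x = ‖x‖ ^ 2 := by
  rw [EuclideanSpace.norm_sq_eq]; simp [evv, RR]

lemma evv_TT {n : ℕ} (P : MvPolynomial (Fin n) ℝ) (x : EuclideanSpace ℝ (Fin n)) :
    evv (TT P) x = ⟪gvec P x, x⟫ := by
  simp [evv, TT, gvec, PiLp.inner_apply]

lemma gvec_RR {n : ℕ} (x : EuclideanSpace ℝ (Fin n)) : gvec (RR n) x = (2:ℝ) • x := by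
  ext i
  simp [gvec, evv, RR, MvPolynomial.pderiv_X, Pi.single_apply]

lemma gvec_DDPP {n : ℕ} (P : MvPolynomial (Fin n) ℝ) (x : EuclideanSpace ℝ (Fin n)) (j : Fin n) :
    gvec (DD P P) x j = 2 * evv (DD P (MvPolynomial.pderiv j P)) x := by
  have hc : ∀ i, MvPolynomial.pderiv j (MvPolynomial.pderiv i P)
      = MvPolynomial.pderiv i (MvPolynomial.pderiv j P) := fun i => by
    have : ⁅MvPolynomial.pderiv (R := ℝ) j, MvPolynomial.pderiv (R := ℝ) i⁆ = 0 := by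
      apply MvPolynomial.derivation_ext
      intro k
      simp [Derivation.commutator_apply, MvPolynomial.pderiv_X, Pi.single_apply, apply_ite]
    have h2 := congrArg (fun d => d P) this
    simpa [Derivation.commutator_apply, sub_eq_zero] using h2
  simp [gvec, DD, evv, hc, Finset.mul_sum]
  apply Finset.sum_congr rfl; intros; ring

/-- Analytic core: a bounded function whose derivative w.r.t. `ρ` has eventually monotone
square has derivative tending to zero. -/
lemma core_zero (h w ρ ρ' : ℝ → ℝ) (s₀ C : ℝ) (hb : ∀ s ≥ s₀, |h s| ≤ C)
    (hd : ∀ s ≥ s₀, HasDerivAt h (w s * ρ' s) s)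
    (hρ : ∀ s ≥ s₀, HasDerivAt ρ (ρ' s) s) (hpos : ∀ s ≥ s₀, 0 ≤ ρ' s)
    (hinf : Tendsto ρ atTop atTop)
    (hsgn : ∀ s ≥ s₀, 0 ≤ w s)
    (hmono : MonotoneOn (fun s => w s ^ 2) (Set.Ici s₀) ∨
      AntitoneOn (fun s => w s ^ 2) (Set.Ici s₀)) :
    Tendsto w atTop (𝓝 0) := by
  -- key : no positive lower bound
  have key : ∀ c > 0, ∀ s₁ ≥ s₀, ¬ ∀ s ≥ s₁, c ≤ w s := by
    intro c hc s₁ hs₁ hw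
    have hm : MonotoneOn (fun s => h s - c * ρ s) (Set.Ici s₁) := by
      apply monotoneOn_of_hasDerivWithinAt_nonneg (convex_Ici s₁)
        (f' := fun s => w s * ρ' s - c * ρ' s)
      · intro s hs
        have hs : s₀ ≤ s := le_trans hs₁ hs
        exact ((hd s hs).continuousAt.sub (continuousAt_const.mul (hρ s hs).continuousAt)).continuousWithinAt
      · intro s hs
        rw [interior_Ici] at hs
        have hs : s₀ ≤ s := le_trans hs₁ (le_of_lt hs)
        exact ((hd s hs).sub ((hρ s hs).const_mul c)).hasDerivWithinAt
      · intro s hs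
        rw [interior_Ici] at hs
        have h1 := hw s (le_of_lt hs)
        have h2 := hpos s (le_trans hs₁ (le_of_lt hs))
        nlinarith
    obtain ⟨s, hs1, hs2⟩ := ((hinf.eventually_gt_atTop ((C + C) / c + ρ s₁)).and
      (eventually_ge_atTop s₁)).exists
    have h1 := hm (Set.self_mem_Ici) hs2 hs2
    have h2 := abs_le.1 (hb s (hs₁.trans hs2))
    have h3 := abs_le.1 (hb s₁ hs₁)
    have h4 : (C + C) / c * c = C + C := by field_simp
    simp only at h1
    nlinarith
  have hex : ∀ c > 0, ∃ s₁ ≥ s₀, ∀ s ≥ s₁, w s ≤ c := by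
    intro c hc
    by_contra hcon
    push Not at hcon
    rcases hmono with hm | hm
    · obtain ⟨s₁, h1, h2⟩ := hcon s₀ le_rfl
      refine key c hc s₁ h1 fun s hs => ?_
      have := hm (a := s₁) (b := s) h1 (le_trans h1 hs) hs
      simp only at this
      have h3 := hsgn s (le_trans h1 hs)
      nlinarith
    · refine key c hc s₀ le_rfl fun s hs => ?_
      obtain ⟨t, h1, h2⟩ := hcon s hs
      have := hm (a := s) (b := t) hs (le_trans hs h1) h1
      simp only at this
      have h3 := hsgn s hs
      nlinarith
  rw [Metric.tendsto_atTop]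
  intro ε hε
  obtain ⟨s₁, h1, h2⟩ := hex (ε / 2) (by positivity)
  refine ⟨s₁, fun s hs => ?_⟩
  rw [Real.dist_eq, sub_zero, abs_of_nonneg (hsgn s (h1.trans hs))]
  linarith [h2 s hs]

lemma core_zero' (h w ρ ρ' : ℝ → ℝ) (s₀ C : ℝ) (hb : ∀ s ≥ s₀, |h s| ≤ C)
    (hd : ∀ s ≥ s₀, HasDerivAt h (w s * ρ' s) s)
    (hρ : ∀ s ≥ s₀, HasDerivAt ρ (ρ' s) s) (hpos : ∀ s ≥ s₀, 0 ≤ ρ' s)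
    (hinf : Tendsto ρ atTop atTop)
    (hsgn : (∀ s ≥ s₀, 0 ≤ w s) ∨ (∀ s ≥ s₀, w s ≤ 0))
    (hmono : MonotoneOn (fun s => w s ^ 2) (Set.Ici s₀) ∨
      AntitoneOn (fun s => w s ^ 2) (Set.Ici s₀)) :
    Tendsto w atTop (𝓝 0) := by
  rcases hsgn with hs | hs
  · exact core_zero h w ρ ρ' s₀ C hb hd hρ hpos hinf hs hmono
  · have := core_zero (fun s => - h s) (fun s => - w s) ρ ρ' s₀ C (by simpa using hb)
      (fun s hs => (hd s hs).neg.congr_deriv (by ring)) hρ hpos hinf (fun s h => by simpa using hs s h)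
      (by simpa using hmono)
    simpa using this.neg

section traj
variable {n : ℕ} (P : MvPolynomial (Fin n) ℝ) (γ : ℝ → EuclideanSpace ℝ (Fin n))

lemma evv_traj (s : ℝ) (hode : HasDerivAt γ (‖gvec P (γ s)‖⁻¹ • gvec P (γ s)) s)
    (Q : MvPolynomial (Fin n) ℝ) :
    HasDerivAt (fun s => evv Q (γ s)) (‖gvec P (γ s)‖⁻¹ * evv (DD P Q) (γ s)) s := by
  have := (evv_hasFDerivAt Q (γ s)).comp_hasDerivAt s hode
  refine this.congr_deriv ?_
  rw [evv_DD, innerSL_apply_apply, inner_smul_right]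

/-- eventually constant sign -/
lemma evv_sign (hode : ∀ s ≥ 0, HasDerivAt γ (‖gvec P (γ s)‖⁻¹ • gvec P (γ s)) s)
    (hosc : ∀ Q : MvPolynomial (Fin n) ℝ,
      ∃ s₀ : ℝ, (∀ s ≥ s₀, evv Q (γ s) = 0) ∨ (∀ s ≥ s₀, evv Q (γ s) ≠ 0))
    (Q : MvPolynomial (Fin n) ℝ) :
    ∃ s₀ : ℝ, (∀ s ≥ s₀, 0 ≤ evv Q (γ s)) ∨ (∀ s ≥ s₀, evv Q (γ s) ≤ 0) := by
  obtain ⟨s₀, h | h⟩ := hosc Q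
  · exact ⟨s₀, Or.inl fun s hs => (h s hs).ge⟩
  · refine ⟨max s₀ 0, ?_⟩
    by_contra hcon
    push Not at hcon
    obtain ⟨⟨a, ha, ha'⟩, ⟨b, hb, hb'⟩⟩ := hcon
    have hcont : ContinuousOn (fun s => evv Q (γ s)) (Set.Ici (max s₀ 0)) := fun s hs =>
      (evv_traj P γ s (hode s (le_trans (le_max_right _ _) hs)) Q).continuousAt.continuousWithinAt
    obtain ⟨c, hc, hc'⟩ := isPreconnected_Ici.intermediate_value (a := a) (b := b) ha hb hcont
      (show (0:ℝ) ∈ Set.Icc _ _ from ⟨ha'.le, hb'.le⟩)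
    exact h c (le_trans (le_max_left _ _) hc) hc'

/-- rational functions are eventually monotone -/
lemma rat_mono (hode : ∀ s ≥ 0, HasDerivAt γ (‖gvec P (γ s)‖⁻¹ • gvec P (γ s)) s)
    (hosc : ∀ Q : MvPolynomial (Fin n) ℝ,
      ∃ s₀ : ℝ, (∀ s ≥ s₀, evv Q (γ s) = 0) ∨ (∀ s ≥ s₀, evv Q (γ s) ≠ 0))
    (A B : MvPolynomial (Fin n) ℝ) (s₁ : ℝ) (hB : ∀ s ≥ s₁, evv B (γ s) ≠ 0) :
    ∃ s₀ : ℝ, MonotoneOn (fun s => evv A (γ s) / evv B (γ s)) (Set.Ici s₀) ∨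
      AntitoneOn (fun s => evv A (γ s) / evv B (γ s)) (Set.Ici s₀) := by
  obtain ⟨s₂, h⟩ := evv_sign P γ hode hosc (DD P A * B - A * DD P B)
  set s₀ := max (max s₁ s₂) 0
  have h1 : ∀ s ∈ Set.Ici s₀, s₁ ≤ s := fun s hs =>
    le_trans (le_trans (le_max_left _ _) (le_max_left _ _)) hs
  have h2 : ∀ s ∈ Set.Ici s₀, s₂ ≤ s := fun s hs =>
    le_trans (le_trans (le_max_right _ _) (le_max_left _ _)) hs
  have h0 : ∀ s ∈ Set.Ici s₀, 0 ≤ s := fun s hs => le_trans (le_max_right _ _) hs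
  have hd : ∀ s ∈ Set.Ici s₀, HasDerivAt (fun s => evv A (γ s) / evv B (γ s))
      (‖gvec P (γ s)‖⁻¹ * evv (DD P A * B - A * DD P B) (γ s) / evv B (γ s) ^ 2) s := by
    intro s hs
    refine ((evv_traj P γ s (hode s (h0 s hs)) A).div (evv_traj P γ s (hode s (h0 s hs)) B)
      (hB s (h1 s hs))).congr_deriv ?_
    rw [evv_sub, evv_mul, evv_mul]; ring
  have hcont : ContinuousOn (fun s => evv A (γ s) / evv B (γ s)) (Set.Ici s₀) := fun s hs =>
    (hd s hs).continuousAt.continuousWithinAt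
  have hint : ∀ s ∈ interior (Set.Ici s₀), s ∈ Set.Ici s₀ := fun s hs => interior_subset hs
  refine ⟨s₀, ?_⟩
  rcases h with h | h
  · left
    refine monotoneOn_of_hasDerivWithinAt_nonneg (convex_Ici s₀) hcont
      (fun s hs => (hd s (hint s hs)).hasDerivWithinAt) fun s hs => ?_
    have := h s (h2 s (hint s hs))
    positivity
  · right
    refine antitoneOn_of_hasDerivWithinAt_nonpos (convex_Ici s₀) hcont
      (fun s hs => (hd s (hint s hs)).hasDerivWithinAt) fun s hs => ?_
    have := h s (h2 s (hint s hs))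
    apply div_nonpos_of_nonpos_of_nonneg _ (by positivity)
    apply mul_nonpos_of_nonneg_of_nonpos (by positivity) this

/-- Packaged: `h` bounded with `dh/d ln r = w`, `w` of polynomial sign, `w²` rational. -/
lemma traj_zero (hode : ∀ s ≥ 0, HasDerivAt γ (‖gvec P (γ s)‖⁻¹ • gvec P (γ s)) s)
    (hosc : ∀ Q : MvPolynomial (Fin n) ℝ,
      ∃ s₀ : ℝ, (∀ s ≥ s₀, evv Q (γ s) = 0) ∨ (∀ s ≥ s₀, evv Q (γ s) ≠ 0))
    (hinf : Tendsto (fun s => ‖γ s‖) atTop atTop)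
    (hT : ∀ᶠ s in atTop, 0 < evv (TT P) (γ s))
    (h w κ : ℝ → ℝ) (A B C : MvPolynomial (Fin n) ℝ) (K : ℝ)
    (hb : ∀ᶠ s in atTop, |h s| ≤ K)
    (hd : ∀ᶠ s in atTop, HasDerivAt h (w s * (‖gvec P (γ s)‖⁻¹ * evv (TT P) (γ s) / ‖γ s‖ ^ 2)) s)
    (hκ : ∀ᶠ s in atTop, 0 < κ s) (hwA : ∀ᶠ s in atTop, w s * κ s = evv A (γ s))
    (hC : ∀ᶠ s in atTop, evv C (γ s) ≠ 0)
    (hw2 : ∀ᶠ s in atTop, w s ^ 2 = evv B (γ s) / evv C (γ s)) :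
    Tendsto w atTop (𝓝 0) := by
  obtain ⟨s₁, h1⟩ := evv_sign P γ hode hosc A
  obtain ⟨s₂, h2⟩ := eventually_atTop.1 hC
  obtain ⟨s₃, h3⟩ := rat_mono P γ hode hosc B C s₂ h2
  obtain ⟨s₄, h4⟩ := eventually_atTop.1 (hb.and (hd.and (hκ.and (hwA.and (hw2.and
    (hT.and ((hinf.eventually_gt_atTop 0).and ((eventually_ge_atTop s₁).and
    ((eventually_ge_atTop s₃).and (eventually_ge_atTop (0:ℝ)))))))))))
  refine core_zero' h w (fun s => Real.log (evv (RR n) (γ s)) / 2)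
    (fun s => ‖gvec P (γ s)‖⁻¹ * evv (TT P) (γ s) / ‖γ s‖ ^ 2) s₄ K
    (fun s hs => (h4 s hs).1) (fun s hs => (h4 s hs).2.1) ?_ ?_ ?_ ?_ ?_
  · intro s hs
    obtain ⟨-, -, -, -, -, -, hr, -, -, h0⟩ := h4 s hs
    have hne : evv (RR n) (γ s) ≠ 0 := by rw [evv_RR]; positivity
    refine (((evv_traj P γ s (hode s h0) (RR n)).log hne).div_const 2).congr_deriv ?_
    rw [evv_RR, evv_DD, gvec_RR, evv_TT, inner_smul_left, real_inner_comm]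
    simp; ring
  · intro s hs
    obtain ⟨-, -, -, -, -, hT, hr, -, -, h0⟩ := h4 s hs
    positivity
  · have : Tendsto (fun s => Real.log ‖γ s‖) atTop atTop := Real.tendsto_log_atTop.comp hinf
    refine this.congr fun s => ?_
    rw [evv_RR, Real.log_pow]; simp
  · rcases h1 with h1 | h1
    · left; intro s hs
      obtain ⟨-, -, hκ, hA, -, hT, hr, hs1, -, h0⟩ := h4 s hs
      have := h1 s hs1
      rw [← hA] at this
      exact nonneg_of_mul_nonneg_left this hκ
    · right; intro s hs
      obtain ⟨-, -, hκ, hA, -, hT, hr, hs1, -, h0⟩ := h4 s hs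
      have := h1 s hs1
      rw [← hA] at this
      by_contra hc
      push Not at hc
      nlinarith [mul_pos hc hκ]
  · have hsub : Set.Ici s₄ ⊆ Set.Ici s₃ := fun s hs => (h4 s hs).2.2.2.2.2.2.2.2.1
    have heq : Set.EqOn (fun s => evv B (γ s) / evv C (γ s)) (fun s => w s ^ 2) (Set.Ici s₄) :=
      fun s hs => (h4 s hs).2.2.2.2.1.symm
    exact h3.imp (fun h => (h.mono hsub).congr heq) (fun h => (h.mono hsub).congr heq)


lemma bdd_of_tendsto {u : ℝ → ℝ} {l : ℝ} (h : Tendsto u atTop (𝓝 l)) :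
    ∀ᶠ s in atTop, |u s| ≤ |l| + 1 := by
  filter_upwards [h.abs.eventually_lt_const (lt_add_one |l|)] with s hs using hs.le

lemma lim_one (hode : ∀ s ≥ 0, HasDerivAt γ (‖gvec P (γ s)‖⁻¹ • gvec P (γ s)) s)
    (hN : ∀ s ≥ 0, 0 < ‖gvec P (γ s)‖)
    (hosc : ∀ Q : MvPolynomial (Fin n) ℝ,
      ∃ s₀ : ℝ, (∀ s ≥ s₀, evv Q (γ s) = 0) ∨ (∀ s ≥ s₀, evv Q (γ s) ≠ 0))
    (hinf : Tendsto (fun s => ‖γ s‖) atTop atTop)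
    (hT : ∀ᶠ s in atTop, 0 < evv (TT P) (γ s))
    (hneg : ∀ s ≥ 0, evv P (γ s) < 0) (m β : ℝ) (hβ : 0 < β) (hm : 0 < m)
    (ha : Tendsto (fun s => evv (TT P) (γ s) * ‖γ s‖ ^ m) atTop (𝓝 (m * β)))
    (hb : Tendsto (fun s => evv P (γ s) * ‖γ s‖ ^ m) atTop (𝓝 (-β))) :
    Tendsto (fun s => ‖γ s‖ ^ (m + 1) * ‖gvec P (γ s)‖) atTop (𝓝 (m * β)) := by
  have hr := hinf.eventually_gt_atTop 0
  have hs0 := eventually_ge_atTop (0:ℝ)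
  have hw := traj_zero P γ hode hosc hinf hT
    (fun s => Real.log (-evv P (γ s)) + m * (Real.log (evv (RR n) (γ s)) / 2))
    (fun s => ‖γ s‖ ^ 2 * ‖gvec P (γ s)‖ ^ 2 / (evv (TT P) (γ s) * evv P (γ s)) + m)
    (fun s => evv (TT P) (γ s) * (- evv P (γ s)))
    (-(1:ℝ) • (RR n * DD P P + MvPolynomial.C m * TT P * P))
    ((RR n * DD P P + MvPolynomial.C m * TT P * P) ^ 2)
    ((TT P * P) ^ 2) (|Real.log β| + 1) ?_ ?_ ?_ ?_ ?_ ?_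
  · have h2 := ((hw.sub_const m).mul ha).mul hb
    have h3 : Tendsto (fun s => (‖γ s‖ ^ (m + 1) * ‖gvec P (γ s)‖) ^ 2) atTop
        (𝓝 ((m * β) ^ 2)) := by
      have e : (0 - m) * (m * β) * (-β) = (m * β) ^ 2 := by ring
      rw [← e]
      refine h2.congr' ?_
      filter_upwards [hr, hT, hs0] with s hr hT hs
      have := (hneg s hs).ne
      rw [Real.rpow_add_one hr.ne']
      field_simp
      ring
    have h4 := h3.sqrt
    rw [Real.sqrt_sq (by positivity)] at h4
    refine h4.congr fun s => ?_
    exact Real.sqrt_sq (by positivity)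
  · apply bdd_of_tendsto
    have h1 := hb.neg.log (by simpa using hβ.ne')
    rw [neg_neg] at h1
    refine h1.congr' ?_
    filter_upwards [hr, hs0] with s hr hs
    have := hneg s hs
    rw [evv_RR, Real.log_pow, ← neg_mul, Real.log_mul (by linarith) (by positivity), Real.log_rpow hr]
    push_cast; ring
  · filter_upwards [hr, hs0, hT] with s hr hs hT
    have h1 := hneg s hs
    have hn := hN s hs
    have hne : evv (RR n) (γ s) ≠ 0 := by rw [evv_RR]; positivity
    refine (((evv_traj P γ s (hode s hs) P).neg.log (neg_ne_zero.2 h1.ne)).add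
      ((((evv_traj P γ s (hode s hs) (RR n)).log hne).div_const 2).const_mul m)).congr_deriv ?_
    have h3 := h1.ne
    rw [evv_RR, evv_DD P (RR n), gvec_RR, evv_TT, inner_smul_left, real_inner_comm, evv_DDPP]
    rw [evv_TT] at hT
    have hT := hT.ne'
    simp
    field_simp
  · filter_upwards [hs0, hT] with s hs hT
    exact mul_pos hT (by linarith [hneg s hs])
  · filter_upwards [hs0, hT] with s hs hT
    have h3 := (hneg s hs).ne
    have : evv (-(1:ℝ) • (RR n * DD P P + MvPolynomial.C m * TT P * P)) (γ s)
      = - (evv (RR n) (γ s) * evv (DD P P) (γ s) + m * evv (TT P) (γ s) * evv P (γ s)) := by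
      simp [evv]; ring
    rw [this, evv_RR, evv_DDPP]
    field_simp
  · filter_upwards [hs0, hT] with s hs hT
    have h3 := (hneg s hs).ne
    rw [evv_pow, evv_mul]; positivity
  · filter_upwards [hs0, hT] with s hs hT
    have h3 := (hneg s hs).ne
    simp only [evv_pow, evv_mul, evv_add, evv_C, evv_RR, evv_DDPP]
    field_simp

lemma lim_two (hode : ∀ s ≥ 0, HasDerivAt γ (‖gvec P (γ s)‖⁻¹ • gvec P (γ s)) s)
    (hN : ∀ s ≥ 0, 0 < ‖gvec P (γ s)‖)
    (hosc : ∀ Q : MvPolynomial (Fin n) ℝ,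
      ∃ s₀ : ℝ, (∀ s ≥ s₀, evv Q (γ s) = 0) ∨ (∀ s ≥ s₀, evv Q (γ s) ≠ 0))
    (hinf : Tendsto (fun s => ‖γ s‖) atTop atTop)
    (hT : ∀ᶠ s in atTop, 0 < evv (TT P) (γ s))
    (m c : ℝ) (hc : 0 < c)
    (hg : Tendsto (fun s => ‖γ s‖ ^ (m + 1) * ‖gvec P (γ s)‖) atTop (𝓝 c)) :
    Tendsto (fun s => (m + 1) + ‖γ s‖ ^ 2 * evv (DD P (DD P P)) (γ s) /
      (2 * evv (TT P) (γ s) * ‖gvec P (γ s)‖ ^ 2)) atTop (𝓝 0) := by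
  have hr := hinf.eventually_gt_atTop 0
  have hs0 := eventually_ge_atTop (0:ℝ)
  refine traj_zero P γ hode hosc hinf hT
    (fun s => Real.log (evv (DD P P) (γ s)) / 2 + (m + 1) * (Real.log (evv (RR n) (γ s)) / 2))
    _ (fun s => 2 * evv (TT P) (γ s) * ‖gvec P (γ s)‖ ^ 2)
    (MvPolynomial.C (2 * (m + 1)) * TT P * DD P P + RR n * DD P (DD P P))
    ((MvPolynomial.C (2 * (m + 1)) * TT P * DD P P + RR n * DD P (DD P P)) ^ 2)
    ((MvPolynomial.C 2 * TT P * DD P P) ^ 2) (|Real.log c| + 1) ?_ ?_ ?_ ?_ ?_ ?_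
  · apply bdd_of_tendsto
    refine (hg.log hc.ne').congr' ?_
    filter_upwards [hr, hs0] with s hr hs
    have := hN s hs
    rw [evv_RR, evv_DDPP, Real.log_pow, Real.log_pow, Real.log_mul (by positivity) (by positivity),
      Real.log_rpow hr]
    push_cast; ring
  · filter_upwards [hr, hs0, hT] with s hr hs hT
    have hn := hN s hs
    have hne : evv (RR n) (γ s) ≠ 0 := by rw [evv_RR]; positivity
    have hne' : evv (DD P P) (γ s) ≠ 0 := by rw [evv_DDPP]; positivity
    refine ((((evv_traj P γ s (hode s hs) (DD P P)).log hne').div_const 2).add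
      ((((evv_traj P γ s (hode s hs) (RR n)).log hne).div_const 2).const_mul (m + 1))).congr_deriv ?_
    rw [evv_RR, evv_DD P (RR n), gvec_RR, evv_TT, inner_smul_left, real_inner_comm, evv_DDPP]
    rw [evv_TT] at hT
    have hT := hT.ne'
    simp
    field_simp
    ring
  · filter_upwards [hs0, hT] with s hs hT
    have := hN s hs
    positivity
  · filter_upwards [hs0, hT] with s hs hT
    have := hN s hs
    simp only [evv_pow, evv_mul, evv_add, evv_C, evv_RR, evv_DDPP]
    field_simp
  · filter_upwards [hs0, hT] with s hs hT
    have := hN s hs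
    simp only [evv_pow, evv_mul, evv_add, evv_C, evv_RR, evv_DDPP]
    positivity
  · filter_upwards [hs0, hT] with s hs hT
    have := hN s hs
    simp only [evv_pow, evv_mul, evv_add, evv_C, evv_RR, evv_DDPP]
    field_simp

lemma lim_three (hode : ∀ s ≥ 0, HasDerivAt γ (‖gvec P (γ s)‖⁻¹ • gvec P (γ s)) s)
    (hN : ∀ s ≥ 0, 0 < ‖gvec P (γ s)‖)
    (hosc : ∀ Q : MvPolynomial (Fin n) ℝ,
      ∃ s₀ : ℝ, (∀ s ≥ s₀, evv Q (γ s) = 0) ∨ (∀ s ≥ s₀, evv Q (γ s) ≠ 0))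
    (hinf : Tendsto (fun s => ‖γ s‖) atTop atTop)
    (hT : ∀ᶠ s in atTop, 0 < evv (TT P) (γ s)) (j : Fin n) :
    Tendsto (fun s => (2 * evv (DD P (MvPolynomial.pderiv j P)) (γ s) * ‖gvec P (γ s)‖ ^ 2
      - evv (MvPolynomial.pderiv j P) (γ s) * evv (DD P (DD P P)) (γ s)) * ‖γ s‖ ^ 2 /
      (2 * ‖gvec P (γ s)‖ ^ 3 * evv (TT P) (γ s))) atTop (𝓝 0) := by
  have hr := hinf.eventually_gt_atTop 0
  have hs0 := eventually_ge_atTop (0:ℝ)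
  refine traj_zero P γ hode hosc hinf hT
    (fun s => evv (MvPolynomial.pderiv j P) (γ s) / √(evv (DD P P) (γ s)))
    _ (fun s => 2 * ‖gvec P (γ s)‖ ^ 3 * evv (TT P) (γ s))
    ((MvPolynomial.C 2 * DD P (MvPolynomial.pderiv j P) * DD P P
      - MvPolynomial.pderiv j P * DD P (DD P P)) * RR n)
    (((MvPolynomial.C 2 * DD P (MvPolynomial.pderiv j P) * DD P P
      - MvPolynomial.pderiv j P * DD P (DD P P)) * RR n) ^ 2)
    (MvPolynomial.C 4 * DD P P ^ 3 * TT P ^ 2) 1 ?_ ?_ ?_ ?_ ?_ ?_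
  · filter_upwards [hs0] with s hs
    have := hN s hs
    rw [evv_DDPP, Real.sqrt_sq this.le, abs_div, abs_of_pos this, div_le_one this]
    exact PiLp.norm_apply_le (gvec P (γ s)) j
  · filter_upwards [hr, hs0, hT] with s hr hs hT
    have hn := hN s hs
    have hne' : evv (DD P P) (γ s) ≠ 0 := by rw [evv_DDPP]; positivity
    refine ((evv_traj P γ s (hode s hs) (MvPolynomial.pderiv j P)).div
      ((evv_traj P γ s (hode s hs) (DD P P)).sqrt hne') (by rw [evv_DDPP]; positivity)).congr_deriv ?_
    rw [evv_DDPP, Real.sqrt_sq hn.le]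
    field_simp
  · filter_upwards [hs0, hT] with s hs hT
    have := hN s hs
    positivity
  · filter_upwards [hs0, hT] with s hs hT
    have := hN s hs
    simp only [evv_pow, evv_mul, evv_add, evv_sub, evv_C, evv_RR, evv_DDPP]
    field_simp
  · filter_upwards [hs0, hT] with s hs hT
    have := hN s hs
    simp only [evv_pow, evv_mul, evv_add, evv_sub, evv_C, evv_RR, evv_DDPP]
    positivity
  · filter_upwards [hs0, hT] with s hs hT
    have := hN s hs
    simp only [evv_pow, evv_mul, evv_add, evv_sub, evv_C, evv_RR, evv_DDPP]
    field_simp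
    norm_num
    ring

/-- gradient of `g`. -/
lemma grad_g (m : ℝ) (x : EuclideanSpace ℝ (Fin n)) (hx : 0 < ‖x‖) (hP : 0 < ‖gvec P x‖) :
    gradient (fun x => ‖x‖ ^ (m + 1) * ‖gradient (evv P) x‖) x =
      (‖x‖ ^ (m + 1) * ‖gvec P x‖) • (((m + 1) / ‖x‖ ^ 2) • x
        + (1 / (2 * ‖gvec P x‖ ^ 2)) • gvec (DD P P) x) := by
  have e : (fun x => ‖x‖ ^ (m + 1) * ‖gradient (evv P) x‖) =
      fun x => (evv (RR n) x) ^ ((m + 1) / 2) * √ (evv (DD P P) x) := by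
    ext y
    rw [evv_gradient, evv_DDPP, Real.sqrt_sq (norm_nonneg _), evv_RR, ← Real.rpow_natCast,
      ← Real.rpow_mul (norm_nonneg _)]
    congr 2; push_cast; ring
  rw [e]
  apply HasGradientAt.gradient
  rw [hasGradientAt_iff_hasFDerivAt]
  have h1 : evv (RR n) x ≠ 0 := by rw [evv_RR]; positivity
  have h2 : evv (DD P P) x ≠ 0 := by rw [evv_DDPP]; positivity
  have h3 := ((evv_hasFDerivAt (RR n) x).rpow_const (p := (m + 1) / 2) (Or.inl h1)).mul
    ((evv_hasFDerivAt (DD P P) x).sqrt h2)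
  refine h3.congr_fderiv ?_
  have h4 : (‖x‖ ^ 2) ^ ((m + 1) / 2) = ‖x‖ ^ (m + 1) := by
    rw [← Real.rpow_natCast, ← Real.rpow_mul (norm_nonneg _)]
    congr 1; push_cast; ring
  ext v
  rw [evv_RR, evv_DDPP, Real.sqrt_sq hP.le, gvec_RR, Real.rpow_sub_one (by positivity), h4]
  simp [inner_smul_left, inner_add_left]
  field_simp
  ring

lemma lim_four (hN : ∀ s ≥ 0, 0 < ‖gvec P (γ s)‖)
    (hinf : Tendsto (fun s => ‖γ s‖) atTop atTop)
    (hT : ∀ᶠ s in atTop, 0 < evv (TT P) (γ s))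
    (m c : ℝ) (hc : 0 < c)
    (ha : Tendsto (fun s => evv (TT P) (γ s) * ‖γ s‖ ^ m) atTop (𝓝 c))
    (hg : Tendsto (fun s => ‖γ s‖ ^ (m + 1) * ‖gvec P (γ s)‖) atTop (𝓝 c))
    (hwg : Tendsto (fun s => (m + 1) + ‖γ s‖ ^ 2 * evv (DD P (DD P P)) (γ s) /
      (2 * evv (TT P) (γ s) * ‖gvec P (γ s)‖ ^ 2)) atTop (𝓝 0))
    (hwj : ∀ j, Tendsto (fun s => (2 * evv (DD P (MvPolynomial.pderiv j P)) (γ s) * ‖gvec P (γ s)‖ ^ 2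
      - evv (MvPolynomial.pderiv j P) (γ s) * evv (DD P (DD P P)) (γ s)) * ‖γ s‖ ^ 2 /
      (2 * ‖gvec P (γ s)‖ ^ 3 * evv (TT P) (γ s))) atTop (𝓝 0)) :
    Tendsto (fun s =>
        ‖γ s‖ * ‖gradient (fun x => ‖x‖ ^ (m + 1) * ‖gradient (evv P) x‖) (γ s)‖)
      atTop (𝓝 0) := by
  have hr := hinf.eventually_gt_atTop 0
  have hs0 := eventually_ge_atTop (0:ℝ)
  -- radial speed tends to one
  have hrd : Tendsto (fun s => evv (TT P) (γ s) / (‖gvec P (γ s)‖ * ‖γ s‖)) atTop (𝓝 1) := by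
    have := ha.div hg hc.ne'
    rw [div_self hc.ne'] at this
    refine this.congr' ?_
    filter_upwards [hr, hs0] with s hr hs
    have := hN s hs
    simp only [Pi.div_apply]
    rw [Real.rpow_add_one hr.ne']
    field_simp
  have hdiff : Tendsto (fun s => ‖(‖γ s‖⁻¹ • γ s - (evv (TT P) (γ s) / (‖gvec P (γ s)‖ * ‖γ s‖)) •
      (‖gvec P (γ s)‖⁻¹ • gvec P (γ s)) : EuclideanSpace ℝ (Fin n))‖) atTop (𝓝 0) := by
    have h1 : Tendsto (fun s => √(1 - (evv (TT P) (γ s) / (‖gvec P (γ s)‖ * ‖γ s‖)) ^ 2)) atTop (𝓝 0) := by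
      have := ((hrd.pow 2).const_sub 1).sqrt
      simpa using this
    refine h1.congr' ?_
    filter_upwards [hr, hs0] with s hr hs
    have := hN s hs
    rw [← Real.sqrt_sq (norm_nonneg (‖γ s‖⁻¹ • γ s - _))]
    congr 1
    have hi : ⟪γ s, gvec P (γ s)⟫ = evv (TT P) (γ s) := by rw [evv_TT, real_inner_comm]
    rw [@norm_sub_sq_real, norm_smul, norm_smul, norm_smul, inner_smul_left, inner_smul_right,
      inner_smul_right, hi]
    simp only [norm_inv, norm_norm, Real.norm_eq_abs, mul_pow, sq_abs, abs_norm, conj_trivial]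
    field_simp
    ring
  have hcoord : ∀ j, Tendsto (fun s =>
      ‖γ s‖ * gradient (fun x => ‖x‖ ^ (m + 1) * ‖gradient (evv P) x‖) (γ s) j) atTop (𝓝 0) := by
    intro j
    have hdj : Tendsto (fun s => (‖γ s‖⁻¹ • γ s - (evv (TT P) (γ s) / (‖gvec P (γ s)‖ * ‖γ s‖)) •
      (‖gvec P (γ s)‖⁻¹ • gvec P (γ s)) : EuclideanSpace ℝ (Fin n)) j) atTop (𝓝 0) :=
      squeeze_zero_norm (fun s => PiLp.norm_apply_le _ j) hdiff
    have hνw : Tendsto (fun s => (evv (MvPolynomial.pderiv j P) (γ s) / ‖gvec P (γ s)‖) *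
        ((m + 1) + ‖γ s‖ ^ 2 * evv (DD P (DD P P)) (γ s) /
      (2 * evv (TT P) (γ s) * ‖gvec P (γ s)‖ ^ 2))) atTop (𝓝 0) := by
      refine bdd_le_mul_tendsto_zero' 1 ?_ hwg
      filter_upwards [hs0] with s hs
      have := hN s hs
      rw [abs_div, abs_of_pos this, div_le_one this]
      exact PiLp.norm_apply_le (gvec P (γ s)) j
    have := hg.mul (((hdj.const_mul (m + 1)).add (hrd.mul (hwj j))).add (hrd.mul hνw))
    simp only [mul_zero, add_zero] at this
    refine this.congr' ?_
    filter_upwards [hr, hs0, hT] with s hr hs hT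
    have := hN s hs
    rw [grad_g P m (γ s) hr this]
    simp only [PiLp.smul_apply, PiLp.add_apply, PiLp.sub_apply, smul_eq_mul, gvec_DDPP]
    simp only [gvec]
    simp only [gvec] at this
    field_simp
    ring
  have hvec : Tendsto (fun s => ‖(‖γ s‖ • gradient (fun x => ‖x‖ ^ (m + 1) * ‖gradient (evv P) x‖) (γ s) : EuclideanSpace ℝ (Fin n))‖) atTop (𝓝 0) := by
    have := (tendsto_finsetSum Finset.univ fun j _ => ((hcoord j).norm.pow 2)).sqrt
    simp only [norm_zero, ne_eq, OfNat.ofNat_ne_zero, not_false_eq_true, zero_pow,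
      Finset.sum_const_zero, Real.sqrt_zero] at this
    refine this.congr fun s => ?_
    rw [EuclideanSpace.norm_eq
      (‖γ s‖ • gradient (fun x => ‖x‖ ^ (m + 1) * ‖gradient (evv P) x‖) (γ s))]
    simp only [PiLp.smul_apply, smul_eq_mul]
  refine hvec.congr fun s => ?_
  rw [norm_smul, norm_norm]

end traj

theorem m_beta_asymptotic_critical_value_at_infinity
    {n : ℕ} (hn : 2 ≤ n)
    (f : EuclideanSpace ℝ (Fin n) → ℝ)
    (hfpoly : ∃ P : MvPolynomial (Fin n) ℝ, ∀ x : EuclideanSpace ℝ (Fin n),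
      f x = MvPolynomial.eval (fun i => x i) P)
    (γ : ℝ → EuclideanSpace ℝ (Fin n))
    (hγreg : ∀ s ∈ Set.Ici (0 : ℝ), gradient f (γ s) ≠ 0)
    (hγode : ∀ s ∈ Set.Ici (0 : ℝ),
      HasDerivAt γ (‖gradient f (γ s)‖⁻¹ • gradient f (γ s)) s)
    (hunbounded : Tendsto (fun s => ‖γ s‖) atTop atTop)
    (hfneg : ∀ s ∈ Set.Ici (0 : ℝ), f (γ s) < 0)
    (hfmono : StrictMonoOn (fun s => f (γ s)) (Set.Ici (0 : ℝ)))
    (hflim : Tendsto (fun s => f (γ s)) atTop (𝓝 0))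
    (hosc : ∀ g : EuclideanSpace ℝ (Fin n) → ℝ,
      (∃ Q : MvPolynomial (Fin n) ℝ, ∀ x : EuclideanSpace ℝ (Fin n),
        g x = MvPolynomial.eval (fun i => x i) Q) →
      ∃ s₀ : ℝ, (∀ s ≥ s₀, g (γ s) = 0) ∨ (∀ s ≥ s₀, g (γ s) ≠ 0))
    (m : ℝ) (hm : 0 < m) (hmQ : ∃ q : ℚ, m = (q : ℝ)) (β : ℝ) (hβ : 0 < β)
    (hexp1 : (fun s => f (γ s) + β * ‖γ s‖ ^ (-m)) =o[atTop] fun s => ‖γ s‖ ^ (-m))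
    (hexp2 : (fun s => ⟪gradient f (γ s), ‖γ s‖⁻¹ • γ s⟫ - m * β * ‖γ s‖ ^ (-1 - m))
      =o[atTop] fun s => ‖γ s‖ ^ (-1 - m)) :
    Tendsto (fun s => ‖γ s‖ ^ (m + 1) * ‖gradient f (γ s)‖) atTop (𝓝 (m * β)) ∧
    Tendsto (fun s =>
        ‖γ s‖ * ‖gradient (fun x => ‖x‖ ^ (m + 1) * ‖gradient f x‖) (γ s)‖)
      atTop (𝓝 0) := by
  obtain ⟨P, hP⟩ := hfpoly
  obtain rfl : f = evv P := funext hP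
  have hr := hunbounded.eventually_gt_atTop 0
  have hode : ∀ s ≥ 0, HasDerivAt γ (‖gvec P (γ s)‖⁻¹ • gvec P (γ s)) s := fun s hs => by
    have := hγode s hs
    rwa [evv_gradient] at this
  have hN : ∀ s ≥ 0, 0 < ‖gvec P (γ s)‖ := fun s hs => by
    have := hγreg s hs
    rw [evv_gradient] at this
    exact norm_pos_iff.2 this
  have hosc' : ∀ Q : MvPolynomial (Fin n) ℝ,
      ∃ s₀ : ℝ, (∀ s ≥ s₀, evv Q (γ s) = 0) ∨ (∀ s ≥ s₀, evv Q (γ s) ≠ 0) :=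
    fun Q => hosc (evv Q) ⟨Q, fun x => rfl⟩
  have hc : 0 < m * β := mul_pos hm hβ
  have ha : Tendsto (fun s => evv (TT P) (γ s) * ‖γ s‖ ^ m) atTop (𝓝 (m * β)) := by
    have := hexp2.tendsto_div_nhds_zero.add_const (m * β)
    rw [zero_add] at this
    refine this.congr' ?_
    filter_upwards [hr] with s hr
    rw [evv_gradient, inner_smul_right, evv_TT, show -1 - m = -(m + 1) by ring,
      Real.rpow_neg hr.le, Real.rpow_add_one hr.ne']
    field_simp
    ring
  have hb : Tendsto (fun s => evv P (γ s) * ‖γ s‖ ^ m) atTop (𝓝 (-β)) := by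
    have := hexp1.tendsto_div_nhds_zero.sub_const β
    rw [zero_sub] at this
    refine this.congr' ?_
    filter_upwards [hr] with s hr
    rw [Real.rpow_neg hr.le]
    field_simp
    ring
  have hT : ∀ᶠ s in atTop, 0 < evv (TT P) (γ s) := by
    filter_upwards [ha.eventually_const_lt hc, hr] with s h hr
    exact pos_of_mul_pos_left h (by positivity)
  have hg := lim_one P γ hode hN hosc' hunbounded hT hfneg m β hβ hm ha hb
  refine ⟨by simpa only [evv_gradient] using hg, ?_⟩
  exact lim_four P γ hN hunbounded hT m (m * β) hc ha hg
    (lim_two P γ hode hN hosc' hunbounded hT m (m * β) hc hg)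
    (lim_three P γ hode hN hosc' hunbounded hT)
end
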